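/- Let G₀ = A₀ *_{C'₀} = ⟨A₀, t | t C'₀ t⁻¹ = ψ(C'₀)⟩ be an HNN extension, and suppose t centralizes C'₀ (so ψ = id on C'₀ and t commutes with C'₀). Then the map defined by φ|_{A₀} = id and φ(t) = t² extends to an injective endomorphism of G₀, and φ(G₀) is a proper subgroup of G₀ isomorphic to G₀. -/

import Mathlib

open HNNExtension HNNExtension.NormalWord in
theorem chain_double {G : Type*} [Group G] (C : Subgroup G) (l : List (ℤˣ × G))
    (h : l.IsChain (fun a b => a.2 ∈ toSubgroup C C a.1 → a.1 = b.1)) :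
    (l.flatMap (fun x => [(x.1, (1 : G)), x])).IsChain
      (fun a b => a.2 ∈ toSubgroup C C a.1 → a.1 = b.1) := by
  induction l with
  | nil => simp
  | cons a l ih =>
    cases l with
    | nil => simp
    | cons b l =>
      rw [List.isChain_cons_cons] at h
      have := ih h.2
      simp only [List.flatMap_cons, List.cons_append, List.nil_append] at this ⊢
      rw [List.isChain_cons_cons, List.isChain_cons_cons]
      exact ⟨fun _ => rfl, h.1, this⟩


/-- Let `G₀ = A₀*_{C'₀} = ⟨A₀, t | t C'₀ t⁻¹ = C'₀⟩` be the HNN extension in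
which the stable letter `t` centralizes `C'₀` (the associated isomorphism is
the identity of `C`).  Then `φ|_{A₀} = id`, `φ(t) = t²` defines an injective,
non-surjective endomorphism of `G₀`; in particular its image is a proper
subgroup of `G₀` isomorphic to `G₀`. -/
theorem stmt_5 {G : Type*} [Group G] (C : Subgroup G) :
    ∃ ψ : HNNExtension G C C (MulEquiv.refl C) →* HNNExtension G C C (MulEquiv.refl C),
      (∀ a : G, ψ (HNNExtension.of a) = HNNExtension.of a) ∧
      ψ HNNExtension.t = HNNExtension.t ^ 2 ∧
      Function.Injective ψ ∧ ¬ Function.Surjective ψ ∧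
      Nonempty (ψ.range ≃* HNNExtension G C C (MulEquiv.refl C)) := by
  classical
  let φ := MulEquiv.refl C
  have ht : ∀ a : C, (HNNExtension.t : HNNExtension G C C φ) * HNNExtension.of (a : G)
      = HNNExtension.of (a : G) * HNNExtension.t := fun a => HNNExtension.t_mul_of a
  let ψ : HNNExtension G C C φ →* HNNExtension G C C φ :=
    HNNExtension.lift HNNExtension.of (HNNExtension.t ^ 2) (by
      intro a
      change _ = HNNExtension.of (a : G) * _
      rw [pow_two, mul_assoc, ht, ← mul_assoc, ht, mul_assoc])
  have hof : ∀ a : G, ψ (HNNExtension.of a) = HNNExtension.of a := fun a =>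
    HNNExtension.lift_of _ _ _ a
  have hψt : ψ HNNExtension.t = HNNExtension.t ^ 2 := HNNExtension.lift_t _ _ _
  have hinj : Function.Injective ψ := by
    rw [injective_iff_map_eq_one]
    intro x hx
    obtain ⟨d⟩ := HNNExtension.NormalWord.TransversalPair.nonempty G C C
    obtain ⟨w, rfl⟩ := (HNNExtension.NormalWord.equiv φ d).symm.surjective x
    change ψ (w.prod φ) = 1 at hx
    change w.prod φ = 1
    let w' : HNNExtension.NormalWord.ReducedWord G C C :=
      ⟨w.head, _, chain_double C w.toList w.chain⟩
    have key : ∀ l : List (ℤˣ × G),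
        ψ (l.map (fun x => (HNNExtension.t : HNNExtension G C C φ) ^ (x.1 : ℤ)
          * HNNExtension.of x.2)).prod
        = ((l.flatMap (fun x => [(x.1, (1 : G)), x])).map
          (fun x => (HNNExtension.t : HNNExtension G C C φ) ^ (x.1 : ℤ)
          * HNNExtension.of x.2)).prod := by
      intro l
      induction l with
      | nil => simp
      | cons a l ih =>
        simp only [List.map_cons, List.prod_cons, map_mul, ih, List.flatMap_cons,
          List.cons_append, List.nil_append, map_zpow, hψt, hof, map_one, mul_one]
        rw [pow_two, (Commute.refl _).mul_zpow]
        simp only [mul_assoc]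
    have hw' : w'.prod φ = 1 := by
      rw [← hx]
      simp only [HNNExtension.NormalWord.ReducedWord.prod, map_mul, hof, key, w']
    have hnil : w'.toList = [] :=
      HNNExtension.ReducedWord.toList_eq_nil_of_mem_of_range φ w' (hw' ▸ one_mem _)
    have hwnil : w.toList = [] := by
      cases h : w.toList with
      | nil => rfl
      | cons a l => simp [w', h] at hnil
    have e : w.prod φ = HNNExtension.of w.head := by
      simp [HNNExtension.NormalWord.ReducedWord.prod, hwnil]
    rw [e, hof] at hx
    rw [e, hx]
  refine ⟨ψ, hof, hψt, hinj, ?_, ⟨(MonoidHom.ofInjective hinj).symm⟩⟩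
  intro hs
  let p : HNNExtension G C C φ →* Multiplicative (ZMod 2) :=
    HNNExtension.lift 1 (Multiplicative.ofAdd 1) (by intro a; simp)
  have hp : p.comp ψ = 1 := by
    apply HNNExtension.hom_ext
    · ext a
      simp [hof, p]
    · simp only [MonoidHom.comp_apply, hψt, map_pow, MonoidHom.one_apply]
      simp only [p, HNNExtension.lift_t]
      decide
  obtain ⟨y, hy⟩ := hs HNNExtension.t
  have h1 := DFunLike.congr_fun hp y
  simp only [MonoidHom.comp_apply, hy, MonoidHom.one_apply] at h1
  simp only [p, HNNExtension.lift_t] at h1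
  revert h1
  decide
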